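/- Let n be an odd positive integer. There exists θ_c > 0 such that for every θ with 0 < θ < θ_c: the function Φ_n^θ has no critical zero, its nodal set N(Φ_n^θ) is connected, and ℝ² ∖ N(Φ_n^θ) has exactly two connected components (i.e. Φ_n^θ has exactly two nodal domains). -/

import Mathlib

open Polynomial Real Set

/-- Physicists' Hermite polynomials: `H 0 = 1`, `H 1 = 2X`,
`H (n+2) = 2X * H (n+1) - 2(n+1) * H n`. -/
noncomputable def hermiteH : ℕ → Polynomial ℝ
  | 0 => 1
  | 1 => Polynomial.C 2 * Polynomial.X
  | (n + 2) => Polynomial.C 2 * Polynomial.X * hermiteH (n + 1)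
      - Polynomial.C ((2 * (n + 1) : ℕ) : ℝ) * hermiteH n

/-- `z : Fin m → ℝ` enumerates the zeros of `P` in increasing order. -/
def IsZeroEnum (P : Polynomial ℝ) (m : ℕ) (z : Fin m → ℝ) : Prop :=
  StrictMono z ∧ (∀ i, P.eval (z i) = 0) ∧ (∀ x : ℝ, P.eval x = 0 → ∃ i, x = z i)

/-- The eigenfunction `Φ_n^θ`. -/
noncomputable def Phi (n : ℕ) (θ : ℝ) (p : ℝ × ℝ) : ℝ :=
  (Real.cos θ * (hermiteH n).eval p.1 + Real.sin θ * (hermiteH n).eval p.2) *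
    Real.exp (-(p.1 ^ 2 + p.2 ^ 2) / 2)

/-- A critical zero of `u` : a common zero of `u` and its differential. -/
def IsCriticalZero (u : ℝ × ℝ → ℝ) (p : ℝ × ℝ) : Prop :=
  u p = 0 ∧ fderiv ℝ u p = 0

/-- Nodal set of `u`. -/
def nodalSet (u : ℝ × ℝ → ℝ) : Set (ℝ × ℝ) := {p | u p = 0}

/-- The set of nodal domains of `u`, i.e. of connected components of the
complement of the nodal set. -/
def nodalDomains (u : ℝ × ℝ → ℝ) : Set (Set (ℝ × ℝ)) :=
  {C | ∃ p, u p ≠ 0 ∧ C = connectedComponentIn {q | u q ≠ 0} p}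

open Filter Topology

/-! Up to a positive factor, `Φ_n^θ` is `v (x, y) = H_n x + s * H_n y` with `s = tan θ`. As the
zeros of `H_n` are simple, `|H_n|` is at least some `m > 0` at the critical points of `H_n`; these
lie in an interval `[a, b]` outside of which `H_n` increases, and for small `s` one has
`|s * H_n| < m` on `[a, b]`. Hence no zero of `v` is critical. To see that `{v > 0}` is connected,
start at one of its points with `y < b`, raise `y` to `a` if `y < a`, and then vary `x` only: the
component of `{H_n > -s * H_n y}` containing `x` is unbounded or contains a maximum point of `H_n`,
so it contains a point `z` with `H_n z ≥ m`, above which one can climb to `y = b`, and further up to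
any height, since `H_n` increases on `[b, ∞)`. At great heights `v` is positive above any given
bounded set of abscissas. By symmetry `{v < 0}` is connected too. Finally the nodal set is the
intersection of the closures of these two nodal domains, which are connected and cover the plane,
so it is connected because the plane is unicoherent. -/

/-! ### Connectedness of zero sets -/

section ZeroSet

variable {X : Type*} [TopologicalSpace X]

theorem eqOn_inter_of_isCoveringMap [SimplyConnectedSpace X] [LocallyPathConnectedSpace X]
    {E Y : Type*} [TopologicalSpace E] [TopologicalSpace Y] {ρ : E → Y} (hρ : IsCoveringMap ρ)
    {A B : Set X} (hA : IsPreconnected A) (hB : IsPreconnected B) (hAc : IsClosed A)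
    (hBc : IsClosed B) (hAB : A ∪ B = univ) {u v : X → E} (hu : Continuous u) (hv : Continuous v)
    (huv : EqOn (ρ ∘ u) (ρ ∘ v) (A ∩ B)) {p : X} (hp : p ∈ A ∩ B) (hpuv : u p = v p) :
    EqOn u v (A ∩ B) := by
  classical
  let g : X → Y := A.piecewise (ρ ∘ u) (ρ ∘ v)
  have hgA : EqOn g (ρ ∘ u) A := piecewise_eqOn _ _ _
  have hgB : EqOn g (ρ ∘ v) B := by
    intro x hxB
    by_cases hxA : x ∈ A
    · exact (hgA hxA).trans (huv ⟨hxA, hxB⟩)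
    · exact piecewise_eq_of_notMem _ _ _ hxA
  have hg : Continuous g := by
    refine Continuous.piecewise (fun x hx => huv ?_) (hρ.continuous.comp hu)
      (hρ.continuous.comp hv)
    rw [frontier_eq_closure_inter_closure, hAc.closure_eq] at hx
    exact ⟨hx.1, closure_minimal (compl_subset_iff_union.2 hAB) hBc hx.2⟩
  obtain ⟨φ, ⟨hφp, hφ⟩, -⟩ := hρ.existsUnique_continuousMap_lifts ⟨g, hg⟩ p (u p) (hgA hp.1).symm
  have hφA : EqOn φ u A := hρ.eqOn_of_comp_eqOn hA φ.continuous.continuousOn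
    hu.continuousOn (fun x hx => (congrFun hφ x).trans (hgA hx)) hp.1 hφp
  have hφB : EqOn φ v B := hρ.eqOn_of_comp_eqOn hB φ.continuous.continuousOn
    hv.continuousOn (fun x hx => (congrFun hφ x).trans (hgB hx)) hp.2 (hφp.trans hpuv)
  exact fun x hx => (hφA hx.1).symm.trans (hφB hx.2)

/-- Simply connected, locally path connected normal spaces are unicoherent. -/
theorem isPreconnected_inter_of_union_eq_univ [NormalSpace X] [SimplyConnectedSpace X]
    [LocallyPathConnectedSpace X] {A B : Set X} (hA : IsPreconnected A) (hB : IsPreconnected B)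
    (hAc : IsClosed A) (hBc : IsClosed B) (hAB : A ∪ B = univ) : IsPreconnected (A ∩ B) := by
  rw [isPreconnected_closed_iff]
  intro C D hC hD hCD ⟨p, hp, hpC⟩ ⟨q, hq, hqD⟩
  by_contra hempty
  have hdisj : Disjoint (A ∩ B ∩ C) (A ∩ B ∩ D) := by
    rw [disjoint_iff_inter_eq_empty, ← inter_inter_distrib_left, ← not_nonempty_iff_eq_empty]
    exact hempty
  obtain ⟨u, hu0, hu1, -⟩ := exists_continuous_zero_one_of_isClosed
    ((hAc.inter hBc).inter hC) ((hAc.inter hBc).inter hD) hdisj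
  -- Modulo `2`, the functions `u` and `-u` agree on all of `A ∩ B`, but as real functions they
  -- agree at `p` and differ at `q`.
  have hu_neg : EqOn ((↑) ∘ u : X → AddCircle (2 : ℝ)) ((↑) ∘ (-u)) (A ∩ B) := by
    intro x hx
    rcases hCD hx with hxC | hxD
    · simp [hu0 ⟨hx, hxC⟩]
    · rw [Function.comp_apply, Function.comp_apply, ← sub_eq_zero, ← AddCircle.coe_sub,
        AddCircle.coe_eq_zero_iff]
      exact ⟨1, by norm_num [hu1 ⟨hx, hxD⟩]⟩
  have hup : u p = 0 := hu0 ⟨hp, hpC⟩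
  have huq : u q = 1 := hu1 ⟨hq, hqD⟩
  have hq_neg : u q = -u q := eqOn_inter_of_isCoveringMap (AddCircle.isCoveringMap_coe 2) hA hB
    hAc hBc hAB u.continuous u.continuous.neg hu_neg hp (by simp [hup]) hq
  linarith

theorem setOf_nonneg_subset_closure_setOf_pos {u : X → ℝ}
    (hu : ∀ x, u x = 0 → ¬ IsLocalMax u x) : {x | 0 ≤ u x} ⊆ closure {x | 0 < u x} := by
  intro x hx
  rcases (show 0 ≤ u x from hx).eq_or_lt with hx0 | hx0
  · by_contra hcl
    refine hu x hx0.symm ?_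
    filter_upwards [isClosed_closure.isOpen_compl.mem_nhds hcl] with y hy
    rw [← hx0]
    exact not_lt.1 fun hy0 => hy (subset_closure hy0)
  · exact subset_closure hx0

theorem isConnected_setOf_eq_zero [NormalSpace X] [SimplyConnectedSpace X]
    [LocallyPathConnectedSpace X] {u : X → ℝ} (hu : Continuous u)
    (hext : ∀ x, u x = 0 → ¬ IsLocalExtr u x) (hpos : IsConnected {x | 0 < u x})
    (hneg : IsConnected {x | u x < 0}) : IsConnected {x | u x = 0} := by
  have hnonneg : IsPreconnected {x | 0 ≤ u x} :=
    hpos.isPreconnected.subset_closure (fun x (hx : 0 < u x) => hx.le)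
      (setOf_nonneg_subset_closure_setOf_pos fun x hx hmax => hext x hx hmax.isExtr)
  have hnonpos : IsPreconnected {x | u x ≤ 0} := by
    refine hneg.isPreconnected.subset_closure (fun x (hx : u x < 0) => hx.le) ?_
    have hnotmax : ∀ x, -u x = 0 → ¬ IsLocalMax (fun x => -u x) x := fun x hx hmax =>
      have hmin : IsLocalMin u x := by simpa only [neg_neg] using hmax.neg
      hext x (neg_eq_zero.1 hx) hmin.isExtr
    simpa using setOf_nonneg_subset_closure_setOf_pos hnotmax
  constructor
  · obtain ⟨x, hx⟩ := hneg.nonempty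
    obtain ⟨y, hy⟩ := hpos.nonempty
    exact mem_range_of_exists_le_of_exists_ge hu ⟨x, le_of_lt hx⟩ ⟨y, le_of_lt hy⟩
  · have hinter := isPreconnected_inter_of_union_eq_univ hnonpos hnonneg
      (isClosed_le hu continuous_const) (isClosed_le continuous_const hu)
      (eq_univ_of_forall fun x => le_total (u x) 0)
    convert hinter using 1
    ext x
    exact le_antisymm_iff

theorem connectedComponentIn_union_eq_left {U V : Set X} (hU : IsOpen U) (hV : IsOpen V)
    (hUV : Disjoint U V) (hUc : IsPreconnected U) {x : X} (hx : x ∈ U) :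
    connectedComponentIn (U ∪ V) x = U :=
  Subset.antisymm
    (isPreconnected_connectedComponentIn.subset_left_of_subset_union hU hV hUV
      (connectedComponentIn_subset _ _) ⟨x, mem_connectedComponentIn (Or.inl hx), hx⟩)
    (hUc.subset_connectedComponentIn hx subset_union_left)

end ZeroSet

/-! ### Nodal sets and nodal domains -/

section Nodal

variable {u v w : ℝ × ℝ → ℝ}

theorem isConnected_nodalSet (hu : Continuous u) (hcrit : ∀ p, ¬ IsCriticalZero u p)
    (hpos : IsConnected {p | 0 < u p}) (hneg : IsConnected {p | u p < 0}) :
    IsConnected (nodalSet u) :=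
  isConnected_setOf_eq_zero hu (fun p hp hext => hcrit p ⟨hp, hext.fderiv_eq_zero⟩) hpos hneg

theorem nodalDomains_eq_pair (hu : Continuous u) (hpos : IsConnected {p | 0 < u p})
    (hneg : IsConnected {p | u p < 0}) :
    nodalDomains u = {{p | 0 < u p}, {p | u p < 0}} := by
  have hdisj : Disjoint {p | 0 < u p} {p | u p < 0} :=
    disjoint_left.2 fun p (hp : 0 < u p) => hp.not_gt
  have hunion : {p | u p ≠ 0} = {p | 0 < u p} ∪ {p | u p < 0} := by
    ext p
    exact ne_iff_gt_or_lt
  have hopen_pos : IsOpen {p | 0 < u p} := isOpen_lt continuous_const hu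
  have hopen_neg : IsOpen {p | u p < 0} := isOpen_lt hu continuous_const
  have hcomp_pos : ∀ p, 0 < u p → connectedComponentIn {q | u q ≠ 0} p = {q | 0 < u q} := by
    intro p hp
    rw [hunion]
    exact connectedComponentIn_union_eq_left hopen_pos hopen_neg hdisj hpos.isPreconnected hp
  have hcomp_neg : ∀ p, u p < 0 → connectedComponentIn {q | u q ≠ 0} p = {q | u q < 0} := by
    intro p hp
    rw [hunion, union_comm]
    exact connectedComponentIn_union_eq_left hopen_neg hopen_pos hdisj.symm hneg.isPreconnected hp
  ext C
  constructor
  · rintro ⟨p, hp, rfl⟩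
    rcases ne_iff_gt_or_lt.1 hp with hp | hp
    · exact Or.inl (hcomp_pos p hp)
    · exact Or.inr (hcomp_neg p hp)
  · rintro (rfl | rfl)
    · obtain ⟨p, hp⟩ := hpos.nonempty
      exact ⟨p, ne_of_gt hp, (hcomp_pos p hp).symm⟩
    · obtain ⟨p, hp⟩ := hneg.nonempty
      exact ⟨p, ne_of_lt hp, (hcomp_neg p hp).symm⟩

theorem ncard_nodalDomains_eq_two (hu : Continuous u) (hpos : IsConnected {p | 0 < u p})
    (hneg : IsConnected {p | u p < 0}) : (nodalDomains u).ncard = 2 := by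
  rw [nodalDomains_eq_pair hu hpos hneg, ncard_pair]
  intro heq
  obtain ⟨p, hp⟩ := hpos.nonempty
  exact lt_asymm (show 0 < u p from hp) (heq.subset hp)

theorem nodalSet_mul (hw : ∀ p, w p ≠ 0) : nodalSet (fun p => v p * w p) = nodalSet v := by
  simp [nodalSet, hw]

theorem nodalDomains_mul (hw : ∀ p, w p ≠ 0) :
    nodalDomains (fun p => v p * w p) = nodalDomains v := by
  simp [nodalDomains, hw]

theorem isCriticalZero_mul_iff {p : ℝ × ℝ} (hv : DifferentiableAt ℝ v p)
    (hw : DifferentiableAt ℝ w p) (hwp : w p ≠ 0) :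
    IsCriticalZero (fun q => v q * w q) p ↔ IsCriticalZero v p := by
  simp only [IsCriticalZero, mul_eq_zero, hwp, or_false, fderiv_fun_mul hv hw]
  refine and_congr_right fun hvp => ?_
  simp [hvp, hwp]

theorem IsCriticalZero.deriv_eq_zero {f g : ℝ → ℝ} (hf : Differentiable ℝ f)
    (hg : Differentiable ℝ g) {p : ℝ × ℝ} (hp : IsCriticalZero (fun q => f q.1 + g q.2) p) :
    deriv f p.1 = 0 ∧ deriv g p.2 = 0 := by
  have hfst := (hf p.1).hasDerivAt.comp_hasFDerivAt p (hasFDerivAt_fst (𝕜 := ℝ))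
  have hsnd := (hg p.2).hasDerivAt.comp_hasFDerivAt p (hasFDerivAt_snd (𝕜 := ℝ))
  have hzero := (hfst.add hsnd).fderiv.symm.trans hp.2
  constructor
  · simpa using DFunLike.congr_fun hzero (1, 0)
  · simpa using DFunLike.congr_fun hzero (0, 1)

theorem not_isCriticalZero_add {f g : ℝ → ℝ} (hf : Differentiable ℝ f) (hg : Differentiable ℝ g)
    {S : Set ℝ} {m : ℝ} (hm : ∀ t, deriv f t = 0 → m ≤ |f t|) (hg' : ∀ t ∉ S, deriv g t ≠ 0)
    (hS : ∀ t ∈ S, |g t| < m) (p : ℝ × ℝ) : ¬ IsCriticalZero (fun q => f q.1 + g q.2) p := by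
  intro hp
  obtain ⟨hf0, hg0⟩ := hp.deriv_eq_zero hf hg
  have hmem : p.2 ∈ S := by_contra fun h => hg' p.2 h hg0
  have habs : |f p.1| = |g p.2| := by rw [eq_neg_of_add_eq_zero_left hp.1, abs_neg]
  exact ((hm p.1 hf0).trans_eq habs).not_gt (hS p.2 hmem)

end Nodal

/-! ### Superlevel sets of sums of functions of separate variables -/

section SeparatedSum

variable {X : Type*} [TopologicalSpace X]

theorem exists_isLocalMax_mem_connectedComponentIn [LocallyConnectedSpace X] {α : Type*}
    [TopologicalSpace α] [LinearOrder α] [OrderClosedTopology α] {f : X → α} (hf : Continuous f)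
    {d : α} {x : X} (hx : d < f x)
    (hK : IsCompact (closure (connectedComponentIn {t | d < f t} x))) :
    ∃ z ∈ connectedComponentIn {t | d < f t} x, IsLocalMax f z := by
  set C := connectedComponentIn {t | d < f t} x
  have hxC : x ∈ C := mem_connectedComponentIn hx
  obtain ⟨z, hz, hmax⟩ := hK.exists_isMaxOn ⟨x, subset_closure hxC⟩ hf.continuousOn
  have hdz : d < f z := hx.trans_le (hmax (subset_closure hxC))
  have hinsert : IsPreconnected (insert z C) :=
    isPreconnected_connectedComponentIn.subset_closure (subset_insert z C)
      (insert_subset hz subset_closure)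
  have hzC : z ∈ C := hinsert.subset_connectedComponentIn (mem_insert_of_mem z hxC)
    (insert_subset hdz (connectedComponentIn_subset _ _)) (mem_insert z C)
  have hopen : IsOpen C := (isOpen_lt continuous_const hf).connectedComponentIn
  exact ⟨z, hzC, hmax.isLocalMax (mem_of_superset (hopen.mem_nhds hzC) subset_closure)⟩

variable {f : X → ℝ} {g : ℝ → ℝ} {a b m : ℝ}

theorem exists_le_mem_connectedComponentIn [LocallyConnectedSpace X] (hf : Continuous f)
    (hf_abs : Tendsto (fun x => |f x|) (cocompact X) atTop)
    (hm : ∀ z, IsLocalMax f z → m ≤ |f z|) {d : ℝ} (hd : -m < d) {x : X} (hx : d < f x) :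
    ∃ z ∈ connectedComponentIn {t | d < f t} x, m ≤ f z := by
  by_contra! hlt
  have hsub : closure (connectedComponentIn {t | d < f t} x) ⊆ {t | |f t| ≤ m} := by
    refine closure_minimal (fun t ht => abs_le.2 ⟨?_, (hlt t ht).le⟩)
      (isClosed_le hf.abs continuous_const)
    have hdt : d < f t := connectedComponentIn_subset {t | d < f t} x ht
    exact (hd.trans hdt).le
  obtain ⟨K, hK, hKm⟩ := mem_cocompact.1 (hf_abs.eventually_gt_atTop m)
  have hcompact : IsCompact (closure (connectedComponentIn {t | d < f t} x)) :=
    hK.of_isClosed_subset isClosed_closure fun t ht =>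
      by_contra fun htK => not_lt.2 (show |f t| ≤ m from hsub ht) (hKm htK)
  obtain ⟨z, hz, hmax⟩ := exists_isLocalMax_mem_connectedComponentIn hf hx hcompact
  have hdz : d < f z := connectedComponentIn_subset {t | d < f t} x hz
  rcases le_abs.1 (hm z hmax) with h | h
  · exact (hlt z hz).not_ge h
  · linarith

theorem joinedIn_setOf_add_pos_of_Icc {x : X} {y y' : ℝ} (hy : y ≤ y')
    (hpos : ∀ t ∈ Icc y y', 0 < f x + g t) :
    JoinedIn {p : X × ℝ | 0 < f p.1 + g p.2} (x, y) (x, y') := by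
  have hjoin : JoinedIn {t | 0 < f x + g t} y y' :=
    JoinedIn.of_segment_subset (by rwa [segment_eq_Icc hy])
  exact (hjoin.map (f := fun t => (x, t)) (by fun_prop)).mono (image_subset_iff.2 fun t ht => ht)

theorem joinedIn_setOf_add_pos_of_monotoneOn {x : X} {y y' : ℝ} (hy : y ≤ y')
    (hg : MonotoneOn g (Icc y y')) (hpos : 0 < f x + g y) :
    JoinedIn {p : X × ℝ | 0 < f p.1 + g p.2} (x, y) (x, y') :=
  joinedIn_setOf_add_pos_of_Icc hy fun t ht =>
    hpos.trans_le (by gcongr; exact hg (left_mem_Icc.2 hy) ht ht.1)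

theorem joinedIn_setOf_add_pos_of_le_snd [PathConnectedSpace X] (hf : Continuous f)
    (htop : Tendsto g atTop atTop) (hb : MonotoneOn g (Ici b)) {p q : X × ℝ} (hbp : b ≤ p.2)
    (hbq : b ≤ q.2) (hp : 0 < f p.1 + g p.2) (hq : 0 < f q.1 + g q.2) :
    JoinedIn {p : X × ℝ | 0 < f p.1 + g p.2} p q := by
  let γ := PathConnectedSpace.somePath p.1 q.1
  obtain ⟨c, hc⟩ := (isCompact_range (hf.comp γ.continuous)).bddBelow
  obtain ⟨y, hcy, hpy, hqy⟩ := ((htop.eventually_gt_atTop (-c)).and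
    ((eventually_ge_atTop p.2).and (eventually_ge_atTop q.2))).exists
  have hup : ∀ r : X × ℝ, b ≤ r.2 → r.2 ≤ y → 0 < f r.1 + g r.2 →
      JoinedIn {p : X × ℝ | 0 < f p.1 + g p.2} r (r.1, y) := fun r hbr hry hr =>
    joinedIn_setOf_add_pos_of_monotoneOn hry (hb.mono fun t ht => hbr.trans ht.1) hr
  have hacross : JoinedIn {p : X × ℝ | 0 < f p.1 + g p.2} (p.1, y) (q.1, y) := by
    have hjoin : JoinedIn {x | 0 < f x + g y} p.1 q.1 :=
      ⟨γ, fun t => neg_lt_iff_pos_add'.1 ((neg_le_neg (hc (mem_range_self t))).trans_lt hcy)⟩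
    exact (hjoin.map (f := fun x => (x, y)) (by fun_prop)).mono
      (image_subset_iff.2 fun x hx => hx)
  exact (hup p hbp hpy hp).trans (hacross.trans (hup q hbq hqy hq).symm)

theorem exists_joinedIn_setOf_add_pos_of_snd_mem_Icc [LocallyPathConnectedSpace X]
    (hf : Continuous f) (hf_abs : Tendsto (fun x => |f x|) (cocompact X) atTop)
    (hm : ∀ z, IsLocalMax f z → m ≤ |f z|) (hg : ∀ t ∈ Icc a b, |g t| < m) {p : X × ℝ}
    (hy : p.2 ∈ Icc a b) (hp : 0 < f p.1 + g p.2) :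
    ∃ z, JoinedIn {p : X × ℝ | 0 < f p.1 + g p.2} p (z, b) := by
  obtain ⟨x, y⟩ := p
  have hopen : IsOpen {t | -g y < f t} := isOpen_lt continuous_const hf
  have hx : -g y < f x := neg_lt_iff_pos_add.2 hp
  obtain ⟨z, hz, hmz⟩ := exists_le_mem_connectedComponentIn hf hf_abs hm
    (neg_lt_neg (abs_lt.1 (hg y hy)).2) hx
  have hjoin : JoinedIn {t | -g y < f t} x z :=
    ((hopen.connectedComponentIn.isConnected_iff_isPathConnected.1
      (isConnected_connectedComponentIn_iff.2 hx)).joinedIn _ (mem_connectedComponentIn hx) _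
      hz).mono (connectedComponentIn_subset _ _)
  refine ⟨z, JoinedIn.trans (y := (z, y)) ?_ ?_⟩
  · exact (hjoin.map (f := fun t => (t, y)) (by fun_prop)).mono
      (image_subset_iff.2 fun t (ht : -g y < f t) => neg_lt_iff_pos_add.1 ht)
  · refine joinedIn_setOf_add_pos_of_Icc hy.2 fun t ht => ?_
    linarith [(abs_lt.1 (hg t ⟨hy.1.trans ht.1, ht.2⟩)).1]

variable [PathConnectedSpace X] [LocallyPathConnectedSpace X]

theorem isConnected_setOf_add_pos (hf : Continuous f)
    (hf_abs : Tendsto (fun x => |f x|) (cocompact X) atTop)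
    (hm : ∀ z, IsLocalMax f z → m ≤ |f z|) (htop : Tendsto g atTop atTop) (hab : a ≤ b)
    (ha : MonotoneOn g (Iic a)) (hb : MonotoneOn g (Ici b)) (hg : ∀ t ∈ Icc a b, |g t| < m) :
    IsConnected {p : X × ℝ | 0 < f p.1 + g p.2} := by
  have hclimb : ∀ p : X × ℝ, 0 < f p.1 + g p.2 →
      ∃ q : X × ℝ, b ≤ q.2 ∧ JoinedIn {p : X × ℝ | 0 < f p.1 + g p.2} p q := by
    intro p hp
    rcases le_total b p.2 with hbp | hpb
    · exact ⟨p, hbp, JoinedIn.refl hp⟩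
    rcases le_total a p.2 with hap | hpa
    · obtain ⟨z, hz⟩ :=
        exists_joinedIn_setOf_add_pos_of_snd_mem_Icc hf hf_abs hm hg ⟨hap, hpb⟩ hp
      exact ⟨(z, b), le_rfl, hz⟩
    · have hup : JoinedIn {p : X × ℝ | 0 < f p.1 + g p.2} p (p.1, a) :=
        joinedIn_setOf_add_pos_of_monotoneOn hpa (ha.mono fun t ht => ht.2) hp
      obtain ⟨z, hz⟩ := exists_joinedIn_setOf_add_pos_of_snd_mem_Icc hf hf_abs hm hg
        (p := (p.1, a)) ⟨le_rfl, hab⟩ hup.target_mem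
      exact ⟨(z, b), le_rfl, hup.trans hz⟩
  refine (isPathConnected_iff.2 ⟨?_, fun p hp q hq => ?_⟩).isConnected
  · obtain ⟨x⟩ := PathConnectedSpace.nonempty (X := X)
    obtain ⟨y, hy⟩ := (htop.eventually_gt_atTop (-f x)).exists
    exact ⟨(x, y), neg_lt_iff_pos_add'.1 hy⟩
  · obtain ⟨p', hbp', hpp'⟩ := hclimb p hp
    obtain ⟨q', hbq', hqq'⟩ := hclimb q hq
    exact hpp'.trans ((joinedIn_setOf_add_pos_of_le_snd hf htop hb hbp' hbq' hpp'.target_mem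
      hqq'.target_mem).trans hqq'.symm)

theorem isConnected_setOf_add_neg (hf : Continuous f)
    (hf_abs : Tendsto (fun x => |f x|) (cocompact X) atTop)
    (hm : ∀ z, IsLocalMin f z → m ≤ |f z|) (hbot : Tendsto g atBot atBot) (hab : a ≤ b)
    (ha : MonotoneOn g (Iic a)) (hb : MonotoneOn g (Ici b)) (hg : ∀ t ∈ Icc a b, |g t| < m) :
    IsConnected {p : X × ℝ | f p.1 + g p.2 < 0} := by
  have hpos : IsConnected {p : X × ℝ | 0 < -f p.1 + -g (-p.2)} := by
    refine isConnected_setOf_add_pos (f := fun x => -f x) (g := fun t => -g (-t)) (m := m)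
      hf.neg (by simpa using hf_abs) (fun z hz => ?_)
      (tendsto_neg_atBot_atTop.comp (hbot.comp tendsto_neg_atTop_atBot))
      (neg_le_neg hab) (fun s hs t ht hst => ?_) (fun s hs t ht hst => ?_) (fun t ht => ?_)
    · rw [abs_neg]
      exact hm z (by simpa using hz.neg)
    · exact neg_le_neg (hb (mem_Ici.2 (le_neg.1 ht)) (mem_Ici.2 (le_neg.1 hs)) (neg_le_neg hst))
    · exact neg_le_neg (ha (mem_Iic.2 (neg_le.1 ht)) (mem_Iic.2 (neg_le.1 hs)) (neg_le_neg hst))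
    · rw [abs_neg]
      exact hg (-t) ⟨le_neg.1 ht.2, neg_le.1 ht.1⟩
  convert hpos.image (Prod.map id Neg.neg) (by fun_prop) using 1
  rw [(Function.Involutive.prodMap (fun _ => rfl) neg_involutive).image_eq_preimage_symm]
  ext p
  simp only [mem_preimage, mem_ofPred_eq, Prod.map_fst, Prod.map_snd, id_eq, neg_neg]
  constructor <;> intro hp <;> linarith

end SeparatedSum

/-! ### Polynomials -/

section Polynomial

variable {P Q : ℝ[X]}

theorem eventually_cocompact_eval_pos (hP : Even P.natDegree) (hlead : 0 < P.leadingCoeff) :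
    ∀ᶠ t in cocompact ℝ, 0 < P.eval t := by
  have hequiv : Asymptotics.IsEquivalent (cocompact ℝ) (fun t => P.eval t)
      (fun t => P.leadingCoeff * t ^ P.natDegree) := by
    rw [cocompact_eq_atBot_atTop]
    exact Asymptotics.IsLittleO.sup P.isEquivalent_atBot_lead P.isEquivalent_atTop_lead
  obtain ⟨φ, hφ, heq⟩ := hequiv.exists_eq_mul
  filter_upwards [heq, hφ.eventually_const_lt one_pos, isCompact_singleton.compl_mem_cocompact]
    with t ht hφt (ht0 : t ≠ 0)
  rw [ht]
  exact mul_pos hφt (mul_pos hlead (hP.pow_pos ht0))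

theorem tendsto_eval_atBot_of_odd (hP : Odd P.natDegree) (hlead : 0 < P.leadingCoeff) :
    Tendsto (fun t => P.eval t) atBot atBot := by
  have hcomp : Tendsto (fun t => (P.comp (-X)).eval t) atTop atBot := by
    refine tendsto_atBot_of_leadingCoeff_nonpos _ ?_ ?_
    · rw [← natDegree_pos_iff_degree_pos]
      simpa [natDegree_comp] using hP.pos
    · rw [leadingCoeff_comp (by simp)]
      simp [hP.neg_one_pow, hlead.le]
  exact (hcomp.comp tendsto_neg_atBot_atTop).congr fun t => by simp

theorem exists_Icc_forall_notMem_derivative_eval_pos (hP : Odd P.natDegree)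
    (hlead : 0 < P.leadingCoeff) :
    ∃ a b, a ≤ b ∧ ∀ t ∉ Icc a b, 0 < P.derivative.eval t := by
  have hdeg : Even P.derivative.natDegree := by
    rw [natDegree_derivative]
    exact Nat.Odd.sub_odd hP odd_one
  have hlead' : 0 < P.derivative.leadingCoeff := by
    rw [leadingCoeff_derivative]
    exact mul_pos hlead (Nat.cast_pos.2 hP.pos)
  obtain ⟨K, hK, hpos⟩ := mem_cocompact.1 (eventually_cocompact_eval_pos hdeg hlead')
  obtain ⟨r, hr0, hr⟩ := hK.isBounded.subset_closedBall_lt 0 0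
  rw [Real.closedBall_eq_Icc] at hr
  exact ⟨0 - r, 0 + r, by linarith, fun t ht => hpos fun htK => ht (hr htK)⟩

theorem exists_pos_forall_le_abs_eval_of_derivative_eval_eq_zero (hP : P.natDegree ≠ 0)
    (hsimple : ∀ t, P.eval t = 0 → P.derivative.eval t ≠ 0) :
    ∃ m > 0, ∀ t, P.derivative.eval t = 0 → m ≤ |P.eval t| := by
  have hP' : P.derivative ≠ 0 := fun h => hP (derivative_eq_zero.1 h)
  have hev : ∀ᶠ m in 𝓝[>] (0 : ℝ), ∀ t ∈ {t | P.derivative.IsRoot t}, m ≤ |P.eval t| := by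
    refine (eventually_all_finite (finite_setOfPred_isRoot hP')).2 fun t ht => ?_
    have hPt : 0 < |P.eval t| := abs_pos.2 fun h => hsimple t h ht
    exact eventually_nhdsWithin_of_eventually_nhds (eventually_le_nhds hPt)
  obtain ⟨m, hm, hm0⟩ := (hev.and self_mem_nhdsWithin).exists
  exact ⟨m, hm0, hm⟩

theorem monotoneOn_eval_of_derivative_eval_nonneg {S : Set ℝ} (hS : Convex ℝ S)
    (hP : ∀ t ∈ interior S, 0 ≤ P.derivative.eval t) : MonotoneOn (fun t => P.eval t) S :=
  monotoneOn_of_deriv_nonneg hS P.continuousOn P.differentiableOn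
    fun t ht => P.deriv.symm ▸ hP t ht

theorem isConnected_setOf_eval_add_pos_and_neg {a b m : ℝ} (hP : P.natDegree ≠ 0)
    (hm : ∀ t, P.derivative.eval t = 0 → m ≤ |P.eval t|) (hQ : Odd Q.natDegree)
    (hlead : 0 < Q.leadingCoeff) (hab : a ≤ b) (hQ' : ∀ t ∉ Icc a b, 0 < Q.derivative.eval t)
    (hsmall : ∀ t ∈ Icc a b, |Q.eval t| < m) :
    IsConnected {p : ℝ × ℝ | 0 < P.eval p.1 + Q.eval p.2} ∧
      IsConnected {p : ℝ × ℝ | P.eval p.1 + Q.eval p.2 < 0} := by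
  have hm_extr : ∀ z, IsLocalExtr (fun t => P.eval t) z → m ≤ |P.eval z| := fun z hz =>
    hm z (hz.hasDerivAt_eq_zero (P.hasDerivAt z))
  have habs : Tendsto (fun t => |P.eval t|) (cocompact ℝ) atTop :=
    P.tendsto_norm_atTop (natDegree_pos_iff_degree_pos.1 hP.bot_lt) tendsto_norm_cocompact_atTop
  have htop : Tendsto (fun t => Q.eval t) atTop atTop :=
    Q.tendsto_atTop_of_leadingCoeff_nonneg (natDegree_pos_iff_degree_pos.1 hQ.pos) hlead.le
  have hbot : Tendsto (fun t => Q.eval t) atBot atBot := tendsto_eval_atBot_of_odd hQ hlead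
  have hmono_a : MonotoneOn (fun t => Q.eval t) (Iic a) :=
    monotoneOn_eval_of_derivative_eval_nonneg (convex_Iic a) fun t ht => by
      rw [interior_Iic] at ht
      exact (hQ' t (notMem_Icc_of_lt ht)).le
  have hmono_b : MonotoneOn (fun t => Q.eval t) (Ici b) :=
    monotoneOn_eval_of_derivative_eval_nonneg (convex_Ici b) fun t ht => by
      rw [interior_Ici] at ht
      exact (hQ' t (notMem_Icc_of_gt ht)).le
  constructor
  · exact isConnected_setOf_add_pos P.continuous habs (fun z hz => hm_extr z hz.isExtr) htop hab
      hmono_a hmono_b hsmall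
  · exact isConnected_setOf_add_neg P.continuous habs (fun z hz => hm_extr z hz.isExtr) hbot hab
      hmono_a hmono_b hsmall

theorem exists_forall_lt_not_isCriticalZero_and_isConnected (hP : P.natDegree ≠ 0)
    (hsimple : ∀ t, P.eval t = 0 → P.derivative.eval t ≠ 0) (hQ : Odd Q.natDegree)
    (hlead : 0 < Q.leadingCoeff) :
    ∃ δ > 0, ∀ s, 0 < s → s < δ →
      (∀ p, ¬ IsCriticalZero (fun p => P.eval p.1 + s * Q.eval p.2) p) ∧
      IsConnected {p : ℝ × ℝ | 0 < P.eval p.1 + s * Q.eval p.2} ∧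
      IsConnected {p : ℝ × ℝ | P.eval p.1 + s * Q.eval p.2 < 0} := by
  obtain ⟨m, hm0, hm⟩ := exists_pos_forall_le_abs_eval_of_derivative_eval_eq_zero hP hsimple
  obtain ⟨a, b, hab, hQ'⟩ := exists_Icc_forall_notMem_derivative_eval_pos hQ hlead
  obtain ⟨M, hM⟩ := (isCompact_Icc (a := a) (b := b)).exists_bound_of_continuousOn
    Q.continuous.continuousOn
  obtain ⟨δ, hδ0, hδ⟩ := exists_pos_mul_lt hm0 M
  refine ⟨δ, hδ0, fun s hs0 hsδ => ?_⟩
  have hsmall : ∀ t ∈ Icc a b, |s * Q.eval t| < m := fun t ht =>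
    calc |s * Q.eval t| = |Q.eval t| * s := by rw [abs_mul, abs_of_pos hs0, mul_comm]
      _ ≤ |Q.eval t| * δ := by gcongr
      _ ≤ M * δ := by gcongr; exact hM t ht
      _ < m := hδ
  have hsQ' : ∀ t ∉ Icc a b, 0 < s * Q.derivative.eval t := fun t ht => mul_pos hs0 (hQ' t ht)
  constructor
  · refine not_isCriticalZero_add P.differentiable (by fun_prop) (by simpa using hm)
      (fun t ht => ?_) hsmall
    rw [deriv_const_mul_field, Polynomial.deriv]
    exact (hsQ' t ht).ne'
  · have hdeg : Odd (C s * Q).natDegree := by rwa [natDegree_C_mul hs0.ne']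
    have hlead_s : 0 < (C s * Q).leadingCoeff := by
      rw [leadingCoeff_mul, leadingCoeff_C]
      exact mul_pos hs0 hlead
    simpa only [eval_C_mul] using isConnected_setOf_eval_add_pos_and_neg hP hm hdeg hlead_s hab
      (by simpa only [derivative_C_mul, eval_C_mul] using hsQ') (by simpa only [eval_C_mul])

end Polynomial

/-! ### Hermite polynomials -/

theorem natDegree_hermiteH_le (n : ℕ) : (hermiteH n).natDegree ≤ n := by
  induction n using Nat.twoStepInduction with
  | zero => simp [hermiteH]
  | one => simp [hermiteH]
  | more n ih₀ ih₁ =>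
    rw [hermiteH, mul_assoc]
    refine (natDegree_sub_le_of_le ((natDegree_C_mul_le _ _).trans natDegree_mul_le)
      (natDegree_C_mul_le _ _)).trans (max_le ?_ (by lia))
    rw [natDegree_X]
    lia

theorem coeff_hermiteH_self (n : ℕ) : (hermiteH n).coeff n = 2 ^ n := by
  induction n using Nat.twoStepInduction with
  | zero => simp [hermiteH]
  | one => simp [hermiteH]
  | more n _ ih₁ =>
    have hvanish : (hermiteH n).coeff (n + 2) = 0 :=
      coeff_eq_zero_of_natDegree_lt ((natDegree_hermiteH_le n).trans_lt (by lia))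
    rw [hermiteH, mul_assoc, coeff_sub, coeff_C_mul, coeff_X_mul, ih₁, coeff_C_mul, hvanish]
    ring

theorem natDegree_hermiteH (n : ℕ) : (hermiteH n).natDegree = n :=
  natDegree_eq_of_le_of_coeff_ne_zero (natDegree_hermiteH_le n) (by simp [coeff_hermiteH_self])

theorem leadingCoeff_hermiteH (n : ℕ) : (hermiteH n).leadingCoeff = 2 ^ n := by
  rw [leadingCoeff, natDegree_hermiteH, coeff_hermiteH_self]

theorem derivative_hermiteH_succ (n : ℕ) :
    derivative (hermiteH (n + 1)) = C (2 * (n + 1) : ℝ) * hermiteH n := by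
  induction n using Nat.twoStepInduction with
  | zero => simp [hermiteH]
  | one => simp [hermiteH]; ring
  | more n ih₀ ih₁ =>
    rw [hermiteH, derivative_sub, derivative_mul, ih₁, derivative_C_mul, derivative_C_mul, ih₀,
      derivative_X, hermiteH]
    simp only [map_mul, map_add, map_ofNat, map_natCast, map_one, Nat.cast_add, Nat.cast_one,
      Nat.cast_mul, Nat.cast_ofNat]
    ring

theorem isCoprime_hermiteH_succ (n : ℕ) : IsCoprime (hermiteH (n + 1)) (hermiteH n) := by
  induction n with
  | zero => exact isCoprime_one_right
  | succ n ih =>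
    have hunit : IsUnit (C ((2 * (n + 1) : ℕ) : ℝ)) := by
      rw [isUnit_C, isUnit_iff_ne_zero]
      positivity
    rw [hermiteH, sub_eq_add_neg, mul_comm (C 2 * X)]
    refine IsCoprime.mul_add_left_left ?_ _
    rw [IsCoprime.neg_left_iff]
    exact (isCoprime_mul_unit_left_left hunit _ _).2 ih.symm

theorem separable_hermiteH (n : ℕ) : (hermiteH n).Separable := by
  cases n with
  | zero => exact separable_one
  | succ n =>
    have hunit : IsUnit (C (2 * (n + 1) : ℝ)) := by
      rw [isUnit_C, isUnit_iff_ne_zero]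
      positivity
    rw [Separable, derivative_hermiteH_succ]
    exact (isCoprime_mul_unit_left_right hunit _ _).2 (isCoprime_hermiteH_succ n)

/-! ### The eigenfunctions -/

theorem Phi_eq_mul (n : ℕ) {θ : ℝ} (hθ : cos θ ≠ 0) :
    Phi n θ = fun p => ((hermiteH n).eval p.1 + tan θ * (hermiteH n).eval p.2) *
      (cos θ * exp (-(p.1 ^ 2 + p.2 ^ 2) / 2)) := by
  ext p
  rw [Phi, ← tan_mul_cos hθ]
  ring

/-- For odd `n`, there exists `θ_c > 0` such that for all
`0 < θ < θ_c`, `Φ_n^θ` has no critical zero, its nodal set is connected, and it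
has exactly two nodal domains. -/
theorem small_theta_two_nodal_domains (n : ℕ) (hodd : Odd n) (hpos : 0 < n) :
    ∃ θc : ℝ, 0 < θc ∧ ∀ θ : ℝ, 0 < θ → θ < θc →
      (∀ p : ℝ × ℝ, ¬ IsCriticalZero (Phi n θ) p) ∧
      IsConnected (nodalSet (Phi n θ)) ∧
      (nodalDomains (Phi n θ)).ncard = 2 := by
  have hsimple : ∀ t, (hermiteH n).eval t = 0 → (hermiteH n).derivative.eval t ≠ 0 := fun t =>
    (separable_hermiteH n).eval₂_derivative_ne_zero (RingHom.id ℝ)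
  have hdeg : Odd (hermiteH n).natDegree := by rwa [natDegree_hermiteH]
  have hlead : 0 < (hermiteH n).leadingCoeff := by
    rw [leadingCoeff_hermiteH]
    positivity
  obtain ⟨δ, hδ0, hδ⟩ := exists_forall_lt_not_isCriticalZero_and_isConnected
    hdeg.pos.ne' hsimple hdeg hlead
  refine ⟨arctan δ, arctan_pos.2 hδ0, fun θ hθ0 hθδ => ?_⟩
  have hθ2 : θ < π / 2 := hθδ.trans (arctan_lt_pi_div_two δ)
  have hcos : 0 < cos θ := cos_pos_of_mem_Ioo ⟨by linarith [pi_pos], hθ2⟩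
  have htan : tan θ < δ := (tan_lt_tan_of_nonneg_of_lt_pi_div_two hθ0.le
    (arctan_lt_pi_div_two δ) hθδ).trans_eq (tan_arctan δ)
  obtain ⟨hcrit, hpos', hneg'⟩ := hδ (tan θ) (tan_pos_of_pos_of_lt_pi_div_two hθ0 hθ2) htan
  have hw : ∀ p : ℝ × ℝ, cos θ * exp (-(p.1 ^ 2 + p.2 ^ 2) / 2) ≠ 0 := fun p => by positivity
  rw [Phi_eq_mul n hcos.ne', nodalSet_mul hw, nodalDomains_mul hw]
  refine ⟨fun p hp => hcrit p ((isCriticalZero_mul_iff ?_ ?_ (hw p)).1 hp), ?_, ?_⟩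
  · fun_prop
  · fun_prop
  · exact isConnected_nodalSet (by fun_prop) hcrit hpos' hneg'
  · exact ncard_nodalDomains_eq_two (by fun_prop) hpos' hneg'
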